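/- arXiv:2211.14645 — 9 statements merged into one kernel-verified Lean document; each statement's English description precedes it below -/
import Mathlib

section
/- Let λ > 0 and ξ ≥ 1 be real numbers. For each natural number k define a_k = 2λ(k + 32ξ)/5 and A_k = λ(k(k + 1 + 64ξ)/(5ξ) + 200ξ). Then for every integer k ≥ 1 one has (8λ/9)·(ξ·A_{k−1} + a_k) ≥ a_k² ≥ (3λ/4)·(ξ·A_{k−1} + ξ·a_k). -/
/-- Step-size parameter inequalities for the Riemacon accelerated algorithm:
with `a k = 2λ(k + 32ξ)/5` and `A k = λ(k(k+1+64ξ)/(5ξ) + 200ξ)`, for every `k ≥ 1`,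
`(8λ/9)(ξ A_{k-1} + a_k) ≥ a_k² ≥ (3λ/4)(ξ A_{k-1} + ξ a_k)`. -/
theorem stmt_0 (lam xi : ℝ) (hlam : 0 < lam) (hxi : 1 ≤ xi)
    (a A : ℕ → ℝ)
    (ha : ∀ k : ℕ, a k = 2 * lam * ((k : ℝ) + 32 * xi) / 5)
    (hA : ∀ k : ℕ, A k = lam * ((k : ℝ) * ((k : ℝ) + 1 + 64 * xi) / (5 * xi) + 200 * xi))
    (k : ℕ) (hk : 1 ≤ k) :
    (8 * lam / 9) * (xi * A (k - 1) + a k) ≥ (a k) ^ 2 ∧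
      (a k) ^ 2 ≥ (3 * lam / 4) * (xi * A (k - 1) + xi * a k) := by
  have hxi0 : 0 < xi := by linarith
  have hk0 : (0 : ℝ) ≤ k := Nat.cast_nonneg k
  have hA' : xi * A (k - 1) =
      lam * (((k : ℝ) - 1) * ((k : ℝ) + 64 * xi) / 5 + 200 * xi ^ 2) := by
    rw [hA, Nat.cast_sub hk]
    push_cast
    field_simp
    ring
  rw [hA', ha]
  -- Each difference is `lam ^ 2` times a polynomial in `k` and `xi` with positive coefficients.
  constructor
  · have h : 0 ≤ lam ^ 2 * (4 / 225 * (k : ℝ) ^ 2 + 256 / 225 * xi * k + 8 / 45 * k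
        + 3136 / 225 * xi ^ 2) := by positivity
    linear_combination h
  · have h : 0 ≤ lam ^ 2 * (1 / 100 * (k : ℝ) ^ 2 + 17 / 50 * xi * k + 3 / 20 * k
        + 48 / 5 * xi + 106 / 25 * xi ^ 2) := by positivity
    linear_combination h
end

section
/- Let E be a real inner product space, X ⊆ E a convex set, and f : E → ℝ convex on X. Fix x ∈ E and λ > 0, and define h : E → ℝ by h(y) = f(y) + ‖x − y‖²/(2λ). Suppose x* minimizes f over X and y* minimizes h over X. Then ‖x − y*‖ ≤ ‖x − x*‖ and ‖y* − x*‖ ≤ ‖x − x*‖. -/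
/-!
Along the segment `z t = t • x* + (1 - t) • y*`, convexity and minimality of `x*` give
`f (z t) ≤ f y*`, so minimality of `y*` for `h` forces `‖x - y*‖ ≤ ‖x - z t‖`: the point `y*` is
nearest to `x` on the segment. Taking `t = 1` yields the first bound. Letting `t → 0` yields
`⟪x - y*, x* - y*⟫ ≤ 0`, i.e. the triangle `x, y*, x*` has a non-acute angle at `y*`, and the
second bound says that the side opposite to it dominates the side `y* x*`.
-/

/-- Euclidean instance of the lemma on where the constrained proximal point goes:
if `x*` minimizes `f` over the convex set `X` and `y*` minimizes
`h(y) = f(y) + ‖x − y‖²/(2λ)` over `X`, then `‖x − y*‖ ≤ ‖x − x*‖` and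
`‖y* − x*‖ ≤ ‖x − x*‖`. -/
theorem stmt_3 {E : Type*} [NormedAddCommGroup E] [InnerProductSpace ℝ E]
    (X : Set E) (hX : Convex ℝ X) (f : E → ℝ)
    (hf : ∀ u ∈ X, ∀ v ∈ X, ∀ t ∈ Set.Icc (0 : ℝ) 1,
      f (t • u + (1 - t) • v) ≤ t * f u + (1 - t) * f v)
    (x : E) (lam : ℝ) (hlam : 0 < lam)
    (h : E → ℝ) (hh : ∀ y, h y = f y + ‖x - y‖ ^ 2 / (2 * lam))
    (xstar : E) (hxs : xstar ∈ X) (hxsmin : ∀ y ∈ X, f xstar ≤ f y)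
    (ystar : E) (hys : ystar ∈ X) (hysmin : ∀ y ∈ X, h ystar ≤ h y) :
    ‖x - ystar‖ ≤ ‖x - xstar‖ ∧ ‖ystar - xstar‖ ≤ ‖x - xstar‖ := by
  have key : ∀ t ∈ Set.Icc (0 : ℝ) 1,
      ‖x - ystar‖ ^ 2 ≤ ‖x - (t • xstar + (1 - t) • ystar)‖ ^ 2 := by
    intro t ht
    have hmem : t • xstar + (1 - t) • ystar ∈ X :=
      hX hxs hys ht.1 (sub_nonneg.2 ht.2) (by ring)
    have h1 := hysmin _ hmem
    rw [hh, hh] at h1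
    have h2 := hf xstar hxs ystar hys t ht
    have h3 := mul_le_mul_of_nonneg_left (hxsmin ystar hys) ht.1
    have h4 : ‖x - ystar‖ ^ 2 / (2 * lam) ≤
        ‖x - (t • xstar + (1 - t) • ystar)‖ ^ 2 / (2 * lam) := by linarith
    exact (div_le_div_iff_of_pos_right (by positivity)).1 h4
  have expand : ∀ t : ℝ, ‖x - (t • xstar + (1 - t) • ystar)‖ ^ 2 =
      ‖x - ystar‖ ^ 2 - 2 * (t * inner ℝ (x - ystar) (xstar - ystar))
        + t ^ 2 * ‖xstar - ystar‖ ^ 2 := by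
    intro t
    have e : x - (t • xstar + (1 - t) • ystar) = (x - ystar) - t • (xstar - ystar) := by
      module
    rw [e, norm_sub_sq_real, inner_smul_right, norm_smul, mul_pow, Real.norm_eq_abs, sq_abs]
  have hinner : inner ℝ (x - ystar) (xstar - ystar) ≤ 0 := by
    by_contra! hp
    set p := inner ℝ (x - ystar) (xstar - ystar)
    set q := ‖xstar - ystar‖ ^ 2
    have hq : 0 ≤ q := by positivity
    -- This step length is at most `1` and small enough that `t * q < 2 * p`, so that moving from
    -- `y*` towards `x*` by it would strictly decrease the distance to `x`.
    obtain ⟨t, ht⟩ : ∃ t, t = p / (p + q) := ⟨_, rfl⟩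
    have ht0 : 0 < t := by rw [ht]; positivity
    have ht1 : t ≤ 1 := by rw [ht]; exact (div_le_one (by positivity)).2 (by linarith)
    have htq : t * (p + q) = p := by rw [ht]; field_simp
    have hk := key t ⟨ht0.le, ht1⟩
    rw [expand] at hk
    have h5 : 0 ≤ t * (t * q - 2 * p) := by linarith
    have h6 := nonneg_of_mul_nonneg_right h5 ht0
    linarith [mul_pos ht0 hp]
  constructor
  · have hk := key 1 (by simp)
    simp only [one_smul, sub_self, zero_smul, add_zero] at hk
    exact (sq_le_sq₀ (norm_nonneg _) (norm_nonneg _)).1 hk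
  · have e1 := expand 1
    simp only [one_smul, sub_self, zero_smul, add_zero] at e1
    rw [norm_sub_rev ystar]
    refine (sq_le_sq₀ (norm_nonneg _) (norm_nonneg _)).1 ?_
    nlinarith [sq_nonneg ‖x - ystar‖]
end

section
/- Let E be a real inner product space, X ⊆ E a convex set, L' > 0, and h : E → ℝ a differentiable function that is convex on X and L'-smooth on X. Let x ∈ E, let x' be a metric projection of x onto X, set x⁺ = x' − (1/L')·∇h(x'), and let p₀ be a metric projection of x⁺ onto X. Then for every p ∈ X, h(p₀) − h(p) ≤ (L'/2)·‖x' − p‖² ≤ (L'/2)·‖x − p‖². -/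
open RealInnerProductSpace

/-!
The point `p₀` minimizes over `X` the quadratic model
`y ↦ h x' + ⟪∇h x', y - x'⟫ + (L'/2) ‖y - x'‖²`, since completing the square turns this model
into `(L'/2) ‖x⁺ - y‖²` plus a constant. Smoothness bounds `h p₀` by the model at `p₀`, hence by
the model at `p`, and the gradient inequality for convex functions
(`add_inner_gradient_le_of_convexOn`) bounds the latter by `h p + (L'/2) ‖p - x'‖²`. The second
inequality is the fact that projecting onto a convex set does not increase the distance to its
points (`norm_proj_sub_le`).
-/

/-- First-order characterization of convexity: `h` lies above its tangent at `u`. -/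
lemma add_inner_gradient_le_of_convexOn {E : Type*} [NormedAddCommGroup E] [InnerProductSpace ℝ E]
    {X : Set E} {h : E → ℝ} (hc : ConvexOn ℝ X h) {g u v : E}
    (hd : HasFDerivAt h (innerSL ℝ g) u) (hu : u ∈ X) (hv : v ∈ X) :
    h u + ⟪g, v - u⟫ ≤ h v := by
  have hφ := hc.comp_affineMap (AffineMap.lineMap (k := ℝ) u v)
  have hline : HasDerivAt (AffineMap.lineMap (k := ℝ) u v) (v - u) (0 : ℝ) :=
    AffineMap.hasDerivAt_lineMap
  have hd' : HasFDerivAt h (innerSL ℝ g) (AffineMap.lineMap (k := ℝ) u v 0) := by simpa using hd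
  have hder := hd'.comp_hasDerivAt (0 : ℝ) hline
  have key := hφ.le_slope_of_hasDerivAt (x := 0) (y := 1) (by simpa using hu) (by simpa using hv)
    one_pos hder
  simp [slope_def_field] at key
  linarith

/-- A metric projection `x'` of `x` onto a convex set is at least as close as `x` to every point
of the set. -/
lemma norm_proj_sub_le {E : Type*} [NormedAddCommGroup E] [InnerProductSpace ℝ E]
    {X : Set E} (hX : Convex ℝ X) {x x' p : E} (hx' : x' ∈ X)
    (hproj : ∀ y ∈ X, ‖x - x'‖ ≤ ‖x - y‖) (hp : p ∈ X) : ‖x' - p‖ ^ 2 ≤ ‖x - p‖ ^ 2 := by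
  have hinf : ‖x - x'‖ = ⨅ w : X, ‖x - w‖ := by
    have : Nonempty X := ⟨⟨x', hx'⟩⟩
    refine le_antisymm (le_ciInf fun w => hproj w w.2) ?_
    exact ciInf_le (f := fun w : X => ‖x - w‖)
      ⟨0, by rintro _ ⟨w, rfl⟩; exact norm_nonneg _⟩ ⟨x', hx'⟩
  have hvar := (norm_eq_iInf_iff_real_inner_le_zero hX hx').1 hinf p hp
  have hsq := norm_sub_sq_real (x - x') (p - x')
  rw [sub_sub_sub_cancel_right, norm_sub_rev p x'] at hsq
  have hnonneg := sq_nonneg ‖x - x'‖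
  linarith

/-- Euclidean instance of the warm-start lemma: if `h` is convex and `L'`-smooth on the
convex set `X`, `x'` is a metric projection of `x` onto `X`,
`x⁺ = x' − (1/L')∇h(x')`, and `p₀` is a metric projection of `x⁺` onto `X`, then for all
`p ∈ X`, `h(p₀) − h(p) ≤ (L'/2)‖x' − p‖² ≤ (L'/2)‖x − p‖²`.
Here `h' y` is the gradient of `h` at `y`, expressed via the Fréchet derivative
`v ↦ ⟪h' y, v⟫`. -/
theorem stmt_4 {E : Type*} [NormedAddCommGroup E] [InnerProductSpace ℝ E]
    (X : Set E) (hX : Convex ℝ X) (L' : ℝ) (hL' : 0 < L')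
    (h : E → ℝ) (h' : E → E) (hdiff : ∀ y, HasFDerivAt h (innerSL ℝ (h' y)) y)
    (hconv : ∀ u ∈ X, ∀ v ∈ X, ∀ t ∈ Set.Icc (0 : ℝ) 1,
      h (t • u + (1 - t) • v) ≤ t * h u + (1 - t) * h v)
    (hsmooth : ∀ u ∈ X, ∀ v ∈ X, h v ≤ h u + ⟪h' u, v - u⟫ + (L' / 2) * ‖v - u‖ ^ 2)
    (x x' : E) (hx'X : x' ∈ X) (hx'proj : ∀ y ∈ X, ‖x - x'‖ ≤ ‖x - y‖)
    (xplus : E) (hxplus : xplus = x' - (1 / L') • h' x')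
    (p₀ : E) (hp₀X : p₀ ∈ X) (hp₀proj : ∀ y ∈ X, ‖xplus - p₀‖ ≤ ‖xplus - y‖)
    (p : E) (hp : p ∈ X) :
    h p₀ - h p ≤ (L' / 2) * ‖x' - p‖ ^ 2 ∧
      (L' / 2) * ‖x' - p‖ ^ 2 ≤ (L' / 2) * ‖x - p‖ ^ 2 := by
  have hcX : ConvexOn ℝ X h := by
    refine ⟨hX, fun u hu v hv a b ha hb hab => ?_⟩
    obtain rfl : b = 1 - a := by linarith
    exact hconv u hu v hv a ⟨ha, by linarith⟩
  -- Completing the square: `(L'/2) ‖x⁺ - y‖²` is the quadratic model of `h` up to a constant.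
  have hexp : ∀ y, (L' / 2) * ‖xplus - y‖ ^ 2 =
      (L' / 2) * ‖y - x'‖ ^ 2 + ⟪h' x', y - x'⟫ + (L' / 2) * ‖(1 / L') • h' x'‖ ^ 2 := by
    intro y
    have e : xplus - y = -((y - x') + (1 / L') • h' x') := by rw [hxplus]; abel
    rw [e, norm_neg, norm_add_sq_real, real_inner_smul_right, real_inner_comm]
    field_simp
  have hgrad := add_inner_gradient_le_of_convexOn hcX (hdiff x') hx'X hp
  have hsm := hsmooth x' hx'X p₀ hp₀X
  have hmin : (L' / 2) * ‖xplus - p₀‖ ^ 2 ≤ (L' / 2) * ‖xplus - p‖ ^ 2 := by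
    gcongr
    exact hp₀proj p hp
  rw [hexp, hexp] at hmin
  refine ⟨?_, ?_⟩
  · rw [norm_sub_rev x' p]
    linarith
  · gcongr ?_ * ?_
    exact norm_proj_sub_le hX hx'X hx'proj hp
end

section
/- Let E be a real inner product space, X ⊆ E a convex set, and f : E → ℝ differentiable such that for all u, v ∈ X: f(v) ≥ f(u) + ⟨∇f(u), v − u⟩ + (μ/2)‖v − u‖² and f(v) ≤ f(u) + ⟨∇f(u), v − u⟩ + (L/2)‖v − u‖², where 0 < μ ≤ L. Suppose x* minimizes f over X. Let x ∈ X and let x⁺ minimize the model y ↦ ⟨∇f(x), y − x⟩ + (L/2)‖y − x‖² over X. Then f(x⁺) − f(x*) ≤ (1 − μ/(2L))·(f(x) − f(x*)). -/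
/-!
By smoothness, `f x⁺` is at most `f x` plus the minimal model value, hence at most `f x` plus the
model value at `x + t • (x* - x)` with `t = μ / L ∈ (0, 1]`. Strong convexity bounds
`⟪∇f(x), x* - x⟫` by `f x* - f x - (μ / 2) ‖x* - x‖²`, and for this `t` the quadratic terms cancel.
This gives the contraction factor `1 - μ / L`, which is stronger than the claimed `1 - μ / (2 L)`.
-/

open RealInnerProductSpace

/-- Euclidean instance of the linear convergence of the model-minimization subroutine:
if `f` is `μ`-strongly convex and `L`-smooth on the convex set `X` (`0 < μ ≤ L`),
`x*` minimizes `f` over `X`, and `x⁺` minimizes the model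
`y ↦ ⟪∇f(x), y − x⟫ + (L/2)‖y − x‖²` over `X`, then
`f(x⁺) − f(x*) ≤ (1 − μ/(2L))(f(x) − f(x*))`. -/
theorem stmt_5 {E : Type*} [NormedAddCommGroup E] [InnerProductSpace ℝ E]
    (X : Set E) (hX : Convex ℝ X)
    (f : E → ℝ) (f' : E → E) (hdiff : ∀ y, HasFDerivAt f (innerSL ℝ (f' y)) y)
    (μ L : ℝ) (hμ : 0 < μ) (hμL : μ ≤ L)
    (hsc : ∀ u ∈ X, ∀ v ∈ X, f v ≥ f u + ⟪f' u, v - u⟫ + (μ / 2) * ‖v - u‖ ^ 2)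
    (hsm : ∀ u ∈ X, ∀ v ∈ X, f v ≤ f u + ⟪f' u, v - u⟫ + (L / 2) * ‖v - u‖ ^ 2)
    (xstar : E) (hxs : xstar ∈ X) (hxsmin : ∀ y ∈ X, f xstar ≤ f y)
    (x : E) (hx : x ∈ X)
    (xplus : E) (hxp : xplus ∈ X)
    (hxpmin : ∀ y ∈ X, ⟪f' x, xplus - x⟫ + (L / 2) * ‖xplus - x‖ ^ 2 ≤
      ⟪f' x, y - x⟫ + (L / 2) * ‖y - x‖ ^ 2) :
    f xplus - f xstar ≤ (1 - μ / (2 * L)) * (f x - f xstar) := by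
  have hL : 0 < L := lt_of_lt_of_le hμ hμL
  obtain ⟨t, ht⟩ : ∃ t, t = μ / L := ⟨_, rfl⟩
  have ht0 : 0 < t := ht ▸ div_pos hμ hL
  have ht1 : t ≤ 1 := ht ▸ (div_le_one hL).2 hμL
  have hLt : L * t = μ := by rw [ht]; field_simp
  have hy : x + t • (xstar - x) ∈ X := hX.add_smul_sub_mem hx hxs ⟨ht0.le, ht1⟩
  have h1 := hxpmin _ hy
  rw [add_sub_cancel_left, inner_smul_right, norm_smul, Real.norm_of_nonneg ht0.le] at h1
  have h2 := hsm x hx xplus hxp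
  have h3 := mul_le_mul_of_nonneg_left (hsc x hx xstar hxs) ht0.le
  -- For `t = μ / L` the quadratic term of the model equals the one from strong convexity.
  have h4 : L / 2 * (t * ‖xstar - x‖) ^ 2 = t * (μ / 2 * ‖xstar - x‖ ^ 2) := by
    rw [← hLt]; ring
  have h5 := mul_nonneg ht0.le (sub_nonneg.2 (hxsmin x hx))
  have h6 : μ / (2 * L) = t / 2 := by rw [ht]; field_simp
  rw [h6]
  linarith
end

section
/- Let E be a real inner product space, X ⊆ E a convex set, and f : E → ℝ convex on X. Fix x̂ ∈ E and λ > 0, define h : E → ℝ by h(y) = f(y) + ‖x̂ − y‖²/(2λ), and suppose y* minimizes h over X. For y ∈ X set v = (x̂ − y)/λ. Then for every point p ∈ X: f(p) ≥ f(y) + ⟨v, p − x̂⟩ + (λ/2)‖v‖² − err(p), where err(p) = −(1/λ)·⟨y − y*, p − x̂⟩ + (h(y) − h(y*)). -/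
open RealInnerProductSpace

/-!
Expanding `err`, `h y` and `v`, all terms in `y` cancel, and the claim becomes
`f p ≥ f y* + ‖x̂ - y*‖² / (2λ) + (1/λ) ⟪x̂ - y*, p - x̂⟫`. It follows from the first-order
optimality condition `f p ≥ f y* + (1/λ) ⟪x̂ - y*, p - y*⟫` (`prox_optimality`), whose right-hand
side exceeds the required one by `‖x̂ - y*‖² / (2λ) ≥ 0`.
-/

/-- A quadratic `t ↦ t D + t² C` that is nonnegative on `(0, 1]` has nonnegative slope at `0`. -/
lemma slope_nonneg {C D : ℝ} (hC : 0 ≤ C)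
    (H : ∀ t : ℝ, 0 < t → t ≤ 1 → 0 ≤ t * D + t ^ 2 * C) : 0 ≤ D := by
  by_contra! hD
  have hpos : 0 < C - D := by linarith
  -- At `t = -D / (C - D)` one has `D + t C = -D² / (C - D) < 0`.
  have ht : 0 < -D / (C - D) := div_pos (by linarith) hpos
  have h1 := H _ ht ((div_le_one hpos).2 (by linarith))
  have h2 : -D / (C - D) * D + (-D / (C - D)) ^ 2 * C
      = -D / (C - D) * (-(D ^ 2 / (C - D))) := by
    field_simp
    ring
  have h3 : 0 < D ^ 2 / (C - D) := div_pos (sq_pos_of_neg hD) hpos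
  nlinarith [mul_pos ht h3]

/-- First-order optimality of a proximal point: `(x̂ - y*) / λ` is a subgradient of `f` at `y*`
relative to `X`. Obtained by comparing `y*` with the points `t p + (1 - t) y*` as `t → 0`. -/
lemma prox_optimality {E : Type*} [NormedAddCommGroup E] [InnerProductSpace ℝ E]
    {X : Set E} (hX : Convex ℝ X) {f : E → ℝ}
    (hf : ∀ u ∈ X, ∀ v ∈ X, ∀ t ∈ Set.Icc (0 : ℝ) 1,
      f (t • u + (1 - t) • v) ≤ t * f u + (1 - t) * f v)
    {xh : E} {lam : ℝ} (hlam : 0 < lam) {ystar : E} (hys : ystar ∈ X)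
    (hmin : ∀ y ∈ X, f ystar + ‖xh - ystar‖ ^ 2 / (2 * lam) ≤ f y + ‖xh - y‖ ^ 2 / (2 * lam))
    {p : E} (hp : p ∈ X) :
    f ystar + ⟪xh - ystar, p - ystar⟫ / lam ≤ f p := by
  suffices 0 ≤ f p - f ystar - ⟪xh - ystar, p - ystar⟫ / lam by linarith
  refine slope_nonneg (C := ‖p - ystar‖ ^ 2 / (2 * lam)) (by positivity) fun t ht0 ht1 => ?_
  have h1 := hmin _ (hX hp hys ht0.le (by linarith : 0 ≤ 1 - t) (by ring))
  have h2 := hf p hp ystar hys t ⟨ht0.le, ht1⟩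
  have h3 : xh - (t • p + (1 - t) • ystar) = (xh - ystar) - t • (p - ystar) := by module
  have h4 : ‖xh - (t • p + (1 - t) • ystar)‖ ^ 2 / (2 * lam) = ‖xh - ystar‖ ^ 2 / (2 * lam)
      - t * (⟪xh - ystar, p - ystar⟫ / lam) + t ^ 2 * (‖p - ystar‖ ^ 2 / (2 * lam)) := by
    rw [h3, norm_sub_sq_real, real_inner_smul_right, norm_smul, mul_pow, Real.norm_eq_abs, sq_abs]
    field_simp
  linarith

/-- Euclidean instance of the approximate-subgradient lower bound from an approximate
proximal point: with `h(y) = f(y) + ‖x̂ − y‖²/(2λ)` minimized over the convex set `X`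
at `y*`, for `y ∈ X` and `v = (x̂ − y)/λ`, every `p ∈ X` satisfies
`f(p) ≥ f(y) + ⟪v, p − x̂⟫ + (λ/2)‖v‖² − err(p)` where
`err(p) = −(1/λ)⟪y − y*, p − x̂⟫ + (h(y) − h(y*))`. Here `xh` stands for `x̂`. -/
theorem stmt_6 {E : Type*} [NormedAddCommGroup E] [InnerProductSpace ℝ E]
    (X : Set E) (hX : Convex ℝ X) (f : E → ℝ)
    (hf : ∀ u ∈ X, ∀ v ∈ X, ∀ t ∈ Set.Icc (0 : ℝ) 1,
      f (t • u + (1 - t) • v) ≤ t * f u + (1 - t) * f v)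
    (xh : E) (lam : ℝ) (hlam : 0 < lam)
    (h : E → ℝ) (hh : ∀ y, h y = f y + ‖xh - y‖ ^ 2 / (2 * lam))
    (ystar : E) (hys : ystar ∈ X) (hysmin : ∀ y ∈ X, h ystar ≤ h y)
    (y : E) (hy : y ∈ X)
    (v : E) (hv : v = (1 / lam) • (xh - y))
    (err : E → ℝ)
    (herr : ∀ p, err p = -(1 / lam) * ⟪y - ystar, p - xh⟫ + (h y - h ystar))
    (p : E) (hp : p ∈ X) :
    f p ≥ f y + ⟪v, p - xh⟫ + (lam / 2) * ‖v‖ ^ 2 - err p := by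
  have hopt := prox_optimality hX hf hlam hys (fun z hz => by simpa only [hh] using hysmin z hz) hp
  have hnorm : lam / 2 * ‖v‖ ^ 2 = ‖xh - y‖ ^ 2 / (2 * lam) := by
    rw [hv, norm_smul, mul_pow, Real.norm_eq_abs, sq_abs]
    field_simp
  have hinner : ⟪v, p - xh⟫ + 1 / lam * ⟪y - ystar, p - xh⟫
      = ⟪xh - ystar, p - ystar⟫ / lam - 2 * (‖xh - ystar‖ ^ 2 / (2 * lam)) := by
    have hp' : p - xh = (p - ystar) - (xh - ystar) := by abel
    have hsum : ⟪xh - y, p - xh⟫ + ⟪y - ystar, p - xh⟫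
        = ⟪xh - ystar, p - ystar⟫ - ‖xh - ystar‖ ^ 2 := by
      rw [← inner_add_left, sub_add_sub_cancel, hp', inner_sub_right, real_inner_self_eq_norm_sq]
    rw [hv, real_inner_smul_left, ← mul_add, hsum]
    field_simp
  have hslack : 0 ≤ ‖xh - ystar‖ ^ 2 / (2 * lam) := by positivity
  rw [herr, hh, hh, hnorm]
  linarith
end

section
/- Let E be a real inner product space, X ⊆ E a convex set, and f : E → ℝ convex on X. Fix x̂ ∈ E and λ > 0, define h : E → ℝ by h(y) = f(y) + ‖x̂ − y‖²/(2λ), and suppose y* minimizes h over X. If y ∈ X satisfies h(y) − h(y*) ≤ ‖x̂ − y*‖²/(34λ), then ‖x̂ − y*‖ ≤ √2 · ‖x̂ − y‖. -/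
/-!
The function `h` is `1/λ`-strongly convex on `X`, so its minimizer satisfies
`‖y − y*‖²/(2λ) ≤ h y − h y*`, which with the accuracy hypothesis bounds `‖y − y*‖` by a
fraction of `‖x̂ − y*‖`; the triangle inequality then compares the two distances to `x̂`.
The constant `34` leaves enough slack to avoid the limit `t → 0` in the strong convexity
argument: testing minimality at `(1/4) y + (3/4) y*` alone gives
`51 ‖y − y*‖² ≤ 4 ‖x̂ − y*‖²`, hence `‖y − y*‖ ≤ (2/7) ‖x̂ − y*‖` and
`‖x̂ − y*‖ ≤ (7/5) ‖x̂ − y‖`, where `7/5 ≤ √2`.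
-/

/-- The convexity defect of the squared distance to `x` at weight `1/4`. -/
lemma norm_sub_quarter_sq {E : Type*} [NormedAddCommGroup E] [InnerProductSpace ℝ E]
    (x y z : E) :
    ‖x - ((1 / 4 : ℝ) • y + (1 - 1 / 4 : ℝ) • z)‖ ^ 2
      = 1 / 4 * ‖x - y‖ ^ 2 + 3 / 4 * ‖x - z‖ ^ 2 - 3 / 16 * ‖y - z‖ ^ 2 := by
  have e1 : x - ((1 / 4 : ℝ) • y + (1 - 1 / 4 : ℝ) • z)
      = (1 / 4 : ℝ) • (x - y) + (3 / 4 : ℝ) • (x - z) := by module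
  have e2 : y - z = (x - z) - (x - y) := by abel
  rw [e1, e2, norm_add_sq_real, norm_sub_sq_real (x - z) (x - y), norm_smul, norm_smul,
    real_inner_smul_left, real_inner_smul_right, real_inner_comm (x - y) (x - z)]
  norm_num
  ring

/-- Euclidean instance of the distance comparison in the approximate-proximal lemma:
if `y*` minimizes `h(y) = f(y) + ‖x̂ − y‖²/(2λ)` over the convex set `X` and
`y ∈ X` satisfies `h(y) − h(y*) ≤ ‖x̂ − y*‖²/(34λ)`, then
`‖x̂ − y*‖ ≤ √2 ‖x̂ − y‖`. Here `xh` stands for `x̂`. -/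
theorem stmt_7 {E : Type*} [NormedAddCommGroup E] [InnerProductSpace ℝ E]
    (X : Set E) (hX : Convex ℝ X) (f : E → ℝ)
    (hf : ∀ u ∈ X, ∀ v ∈ X, ∀ t ∈ Set.Icc (0 : ℝ) 1,
      f (t • u + (1 - t) • v) ≤ t * f u + (1 - t) * f v)
    (xh : E) (lam : ℝ) (hlam : 0 < lam)
    (h : E → ℝ) (hh : ∀ y, h y = f y + ‖xh - y‖ ^ 2 / (2 * lam))
    (ystar : E) (hys : ystar ∈ X) (hysmin : ∀ y ∈ X, h ystar ≤ h y)
    (y : E) (hy : y ∈ X)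
    (hacc : h y - h ystar ≤ ‖xh - ystar‖ ^ 2 / (34 * lam)) :
    ‖xh - ystar‖ ≤ Real.sqrt 2 * ‖xh - y‖ := by
  have hm : (1 / 4 : ℝ) • y + (1 - 1 / 4 : ℝ) • ystar ∈ X :=
    hX hy hys (by norm_num) (by norm_num) (by norm_num)
  have h1 := hysmin _ hm
  have h2 := hf y hy ystar hys (1 / 4) ⟨by norm_num, by norm_num⟩
  rw [hh, hh, norm_sub_quarter_sq] at h1
  rw [hh, hh] at hacc
  have key : 51 * ‖y - ystar‖ ^ 2 ≤ 4 * ‖xh - ystar‖ ^ 2 := by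
    -- Writing every quotient as a multiple of `1/λ` makes the combination linear.
    have c1 : ∀ a : ℝ, a / (2 * lam) = (a / lam) / 2 := fun a => by field_simp
    have c2 : ∀ a : ℝ, a / (34 * lam) = (a / lam) / 34 := fun a => by field_simp
    simp only [c1, c2, add_div, sub_div, mul_div_assoc] at h1 hacc
    have h3 : 51 * (‖y - ystar‖ ^ 2 / lam) ≤ 4 * (‖xh - ystar‖ ^ 2 / lam) := by
      linarith
    rw [← mul_div_assoc, ← mul_div_assoc] at h3
    exact (div_le_div_iff_of_pos_right hlam).1 h3
  have hd : ‖y - ystar‖ ≤ 2 / 7 * ‖xh - ystar‖ := by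
    refine (sq_le_sq₀ (by positivity) (by positivity)).1 ?_
    nlinarith [sq_nonneg ‖xh - ystar‖]
  have htri : ‖xh - ystar‖ ≤ ‖xh - y‖ + ‖y - ystar‖ := norm_sub_le_norm_sub_add_norm_sub _ _ _
  have hs : (7 / 5 : ℝ) ≤ Real.sqrt 2 := Real.le_sqrt_of_sq_le (by norm_num)
  calc ‖xh - ystar‖ ≤ 7 / 5 * ‖xh - y‖ := by linarith
    _ ≤ Real.sqrt 2 * ‖xh - y‖ := by gcongr
end

section
/- Let E be a real inner product space, μ > 0, and f : E → ℝ a μ-strongly convex function on E. Let x_g minimize f over E, let c ∈ E and r ≥ 0, and let x* minimize f over the closed ball B̄(c, r) = {y ∈ E : ‖y − c‖ ≤ r}. Then ‖x* − x_g‖ ≤ ‖c − x_g‖. -/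
/-!
If `xstar ≠ xg`, strong convexity makes `f` strictly smaller than `f xstar` at every point strictly
between `xstar` and `xg`, so the open segment leaves the ball immediately. Hence
`⟪xstar - c, xg - xstar⟫ ≥ 0`: the angle at `xstar` in the triangle `c, xstar, xg` is at least a
right angle, and the side `c - xg` opposite to it is at least as long as `xstar - xg`.
-/

/-- Euclidean instance: the minimizer `x*` of a `μ`-strongly convex function over a
closed ball is no farther from the global minimizer `x_g` than the center `c` is. -/
theorem stmt_13 {E : Type*} [NormedAddCommGroup E] [InnerProductSpace ℝ E]
    (μ : ℝ) (hμ : 0 < μ) (f : E → ℝ)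
    (hsc : ∀ u v : E, ∀ t ∈ Set.Icc (0 : ℝ) 1,
      f (t • u + (1 - t) • v) ≤ t * f u + (1 - t) * f v - (μ / 2) * t * (1 - t) * ‖u - v‖ ^ 2)
    (xg : E) (hxg : ∀ y : E, f xg ≤ f y)
    (c : E) (r : ℝ) (hr : 0 ≤ r)
    (xstar : E) (hxs : xstar ∈ Metric.closedBall c r)
    (hxsmin : ∀ y ∈ Metric.closedBall c r, f xstar ≤ f y) :
    ‖xstar - xg‖ ≤ ‖c - xg‖ := by
  rcases eq_or_ne xstar xg with rfl | hne
  · simp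
  have hb : 0 < ‖xg - xstar‖ ^ 2 := by
    have : 0 < ‖xg - xstar‖ := norm_pos_iff.2 (sub_ne_zero.2 hne.symm)
    positivity
  have hangle : 0 ≤ inner ℝ (xstar - c) (xg - xstar) := by
    by_contra! hp
    set p : ℝ := inner ℝ (xstar - c) (xg - xstar) with hpdef
    set B : ℝ := ‖xg - xstar‖ ^ 2 with hB
    -- A step `t ∈ (0, 1)` with `t * B ≤ -p`, so that moving by `t` does not increase the
    -- distance to `c`.
    obtain ⟨t, ht0, ht1, htB⟩ : ∃ t : ℝ, 0 < t ∧ t < 1 ∧ t * B ≤ -p := by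
      have hBp : 0 < B - p := by linarith
      refine ⟨-p / (B - p), div_pos (by linarith) hBp, (div_lt_one hBp).2 (by linarith), ?_⟩
      rw [div_mul_eq_mul_div, div_le_iff₀ hBp]
      nlinarith [sq_nonneg p]
    have hsub : t • xg + (1 - t) • xstar - c = (xstar - c) + t • (xg - xstar) := by
      module
    have hmem : t • xg + (1 - t) • xstar ∈ Metric.closedBall c r := by
      rw [mem_closedBall_iff_norm] at hxs ⊢
      refine le_trans ?_ hxs
      rw [hsub]
      refine (sq_le_sq₀ (norm_nonneg _) (norm_nonneg _)).1 ?_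
      rw [norm_add_sq_real, inner_smul_right, norm_smul, mul_pow, Real.norm_eq_abs, sq_abs,
        ← hpdef, ← hB]
      nlinarith
    have hge := hxsmin _ hmem
    have hle := hsc xg xstar t ⟨ht0.le, ht1.le⟩
    have hgap : 0 < (μ / 2) * t * (1 - t) * ‖xg - xstar‖ ^ 2 := by
      have : 0 < 1 - t := by linarith
      positivity
    nlinarith [mul_nonneg ht0.le (sub_nonneg.2 (hxg xstar))]
  refine (sq_le_sq₀ (norm_nonneg _) (norm_nonneg _)).1 ?_
  have hsum : xg - c = (xstar - c) + (xg - xstar) := by abel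
  rw [norm_sub_rev c xg, norm_sub_rev xstar xg, hsum, norm_add_sq_real]
  nlinarith [sq_nonneg ‖xstar - c‖]
end

section
/- Let E be a real inner product space, X ⊆ E a convex set, and f : E → ℝ differentiable such that for all u, v ∈ E: f(v) ≥ f(u) + ⟨∇f(u), v − u⟩ + (μ/2)‖v − u‖² and f(v) ≤ f(u) + ⟨∇f(u), v − u⟩ + (L/2)‖v − u‖², where 0 < μ ≤ L. Suppose x* ∈ X minimizes f over E. Given x ∈ X, let x̃ = x − (1/L)·∇f(x), and let x⁺ be a metric projection of x̃ onto X. Then ‖x⁺ − x*‖² ≤ (1 − μ/L)·‖x − x*‖². -/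
/-!
Since `x*` minimizes `f` globally, smoothness at the gradient step `x̃` gives
`f x* ≤ f x̃ ≤ f x - ‖∇f x‖² / (2L)`. Adding the strong convexity bound between `x` and `x*`
yields `2⟪∇f x, x - x*⟫ ≥ ‖∇f x‖² / L + μ‖x - x*‖²`, and expanding `‖x̃ - x*‖²` turns this into
`‖x̃ - x*‖² ≤ (1 - μ/L)‖x - x*‖²`. Projecting onto the convex set `X ∋ x*` does not increase
the distance to `x*`, by the obtuse-angle characterization of the projection.
-/

open RealInnerProductSpace

/-- Euclidean instance of the one-step contraction of metric-projected gradient descent: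
if `f` is `μ`-strongly convex and `L`-smooth on `E` (`0 < μ ≤ L`), `x* ∈ X` minimizes `f`
over `E`, and `x⁺` is the metric projection onto the convex set `X` of
`x̃ = x − (1/L)∇f(x)` for `x ∈ X`, then `‖x⁺ − x*‖² ≤ (1 − μ/L)‖x − x*‖²`. -/
theorem stmt_16 {E : Type*} [NormedAddCommGroup E] [InnerProductSpace ℝ E]
    (X : Set E) (hX : Convex ℝ X)
    (f : E → ℝ) (f' : E → E) (hdiff : ∀ y, HasFDerivAt f (innerSL ℝ (f' y)) y)
    (μ L : ℝ) (hμ : 0 < μ) (hμL : μ ≤ L)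
    (hsc : ∀ u v : E, f v ≥ f u + ⟪f' u, v - u⟫ + (μ / 2) * ‖v - u‖ ^ 2)
    (hsm : ∀ u v : E, f v ≤ f u + ⟪f' u, v - u⟫ + (L / 2) * ‖v - u‖ ^ 2)
    (xstar : E) (hxs : xstar ∈ X) (hxsmin : ∀ y : E, f xstar ≤ f y)
    (x : E) (hx : x ∈ X)
    (xtilde : E) (hxt : xtilde = x - (1 / L) • f' x)
    (xplus : E) (hxpX : xplus ∈ X) (hxpproj : ∀ y ∈ X, ‖xtilde - xplus‖ ≤ ‖xtilde - y‖) :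
    ‖xplus - xstar‖ ^ 2 ≤ (1 - μ / L) * ‖x - xstar‖ ^ 2 := by
  have hL : 0 < L := lt_of_lt_of_le hμ hμL
  have hstep : ‖xtilde - xstar‖ ^ 2 ≤ (1 - μ / L) * ‖x - xstar‖ ^ 2 := by
    -- The minimizer lies below the smoothness bound evaluated at the gradient step.
    have hdesc : f xstar ≤ f x - ‖f' x‖ ^ 2 / (2 * L) := by
      have h := (hxsmin (x - (1 / L) • f' x)).trans (hsm x (x - (1 / L) • f' x))
      rw [sub_sub_cancel_left, inner_neg_right, norm_neg, inner_smul_right,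
        real_inner_self_eq_norm_sq, norm_smul, Real.norm_of_nonneg (by positivity)] at h
      refine h.trans (le_of_eq ?_)
      field_simp
      ring
    have hconv := hsc x xstar
    rw [norm_sub_rev, ← neg_sub x xstar, inner_neg_right] at hconv
    have hkey : 0 ≤ 2 * ⟪f' x, x - xstar⟫ - μ * ‖x - xstar‖ ^ 2 - ‖f' x‖ ^ 2 / L := by
      have : ‖f' x‖ ^ 2 / L = 2 * (‖f' x‖ ^ 2 / (2 * L)) := by field_simp
      linarith
    have hexp : ‖xtilde - xstar‖ ^ 2 = (1 - μ / L) * ‖x - xstar‖ ^ 2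
        - (1 / L) * (2 * ⟪f' x, x - xstar⟫ - μ * ‖x - xstar‖ ^ 2 - ‖f' x‖ ^ 2 / L) := by
      rw [hxt, sub_right_comm, norm_sub_sq_real, inner_smul_right, norm_smul,
        Real.norm_of_nonneg (by positivity), real_inner_comm]
      field_simp
      ring
    have : 0 ≤ (1 / L) * (2 * ⟪f' x, x - xstar⟫ - μ * ‖x - xstar‖ ^ 2 - ‖f' x‖ ^ 2 / L) :=
      mul_nonneg (by positivity) hkey
    linarith
  have hobt : ⟪xtilde - xplus, xstar - xplus⟫ ≤ 0 := by
    refine (norm_eq_iInf_iff_real_inner_le_zero hX hxpX).1 ?_ xstar hxs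
    haveI : Nonempty X := ⟨⟨xplus, hxpX⟩⟩
    refine le_antisymm (le_ciInf fun w => hxpproj w w.2) ?_
    exact ciInf_le (f := fun w : X => ‖xtilde - w‖)
      ⟨0, by rintro _ ⟨w, rfl⟩; exact norm_nonneg _⟩ ⟨xplus, hxpX⟩
  have hproj : ‖xplus - xstar‖ ^ 2 ≤ ‖xtilde - xstar‖ ^ 2 := by
    have h := norm_sub_sq_real (xtilde - xplus) (xstar - xplus)
    rw [sub_sub_sub_cancel_right, norm_sub_rev xstar xplus] at h
    nlinarith [sq_nonneg ‖xtilde - xplus‖]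
  exact hproj.trans hstep
end

section
/- Let E be a real inner product space and f : E → ℝ a function convex on E, with x_g a minimizer of f over E. Let R > 0 and D ∈ (0, 4R], let x ∈ E satisfy ‖x − x_g‖ ≤ 2R, let ε ≥ 0, and suppose x⁺ ∈ E satisfies f(x⁺) ≤ f(y) + ε for every y in the closed ball B̄(x, D/2) = {y ∈ E : ‖y − x‖ ≤ D/2}. Then f(x⁺) − f(x_g) ≤ (1 − D/(4R))·(f(x) − f(x_g)) + ε. -/
/-- Euclidean instance of the one-ball progress step of boosted Riemacon: if `f` is
convex on `E` with global minimizer `x_g`, `‖x − x_g‖ ≤ 2R`, `0 < D ≤ 4R`, and `x⁺`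
is an `ε`-minimizer of `f` over the closed ball `B̄(x, D/2)`, then
`f(x⁺) − f(x_g) ≤ (1 − D/(4R))(f(x) − f(x_g)) + ε`. -/
theorem stmt_18 {E : Type*} [NormedAddCommGroup E] [InnerProductSpace ℝ E]
    (f : E → ℝ)
    (hf : ∀ u v : E, ∀ t ∈ Set.Icc (0 : ℝ) 1,
      f (t • u + (1 - t) • v) ≤ t * f u + (1 - t) * f v)
    (xg : E) (hxg : ∀ y : E, f xg ≤ f y)
    (R D : ℝ) (hR : 0 < R) (hD0 : 0 < D) (hD : D ≤ 4 * R)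
    (x : E) (hx : ‖x - xg‖ ≤ 2 * R)
    (ε : ℝ) (hε : 0 ≤ ε)
    (xplus : E) (hxplus : ∀ y ∈ Metric.closedBall x (D / 2), f xplus ≤ f y + ε) :
    f xplus - f xg ≤ (1 - D / (4 * R)) * (f x - f xg) + ε := by
  -- Compare `xplus` with the point `x + t • (xg - x)`, `t = D / (4R)`: it is at distance
  -- at most `t * 2R = D / 2` from `x`, and convexity bounds `f` there.
  have ht0 : 0 ≤ D / (4 * R) := by positivity
  have ht1 : D / (4 * R) ≤ 1 := (div_le_one (by positivity)).2 hD
  have htR : D / (4 * R) * (2 * R) = D / 2 := by field_simp; norm_num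
  generalize D / (4 * R) = t at *
  have hmem : t • xg + (1 - t) • x ∈ Metric.closedBall x (D / 2) := by
    have h : t • xg + (1 - t) • x - x = t • (xg - x) := by module
    rw [mem_closedBall_iff_norm, h, norm_smul, Real.norm_of_nonneg ht0, norm_sub_rev, ← htR]
    gcongr
  linarith [hxplus _ hmem, hf xg x t ⟨ht0, ht1⟩]
end
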